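/- arXiv:2212.13859 — 2 statements merged into one kernel-verified Lean document; each statement's English description precedes it below -/
import Mathlib

section
/- Fix α, θ ∈ ℝ. The spectrum of the homogeneous Y–Y twisted walk is symmetric in momentum, i.e. Tr(U_YY(−k)) = Tr(U_YY(k)) holds for all k ∈ ℝ, if and only if sin(θ)·sin(4α) = 0 (that is, θ = nπ or α = nπ/4 for some integer n). -/
open Matrix Filter Topology

noncomputable def σx : Matrix (Fin 2) (Fin 2) ℂ := !![0, 1; 1, 0]
noncomputable def σy : Matrix (Fin 2) (Fin 2) ℂ := !![0, -Complex.I; Complex.I, 0]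
noncomputable def σz : Matrix (Fin 2) (Fin 2) ℂ := !![1, 0; 0, -1]

/-- Rotation about the x-axis by angle `t`. -/
noncomputable def Rx (t : ℝ) : Matrix (Fin 2) (Fin 2) ℂ :=
  !![(Real.cos (t/2) : ℂ), -Complex.I * Real.sin (t/2);
     -Complex.I * Real.sin (t/2), (Real.cos (t/2) : ℂ)]

/-- Rotation about the y-axis by angle `t`. -/
noncomputable def Ry (t : ℝ) : Matrix (Fin 2) (Fin 2) ℂ :=
  !![(Real.cos (t/2) : ℂ), -(Real.sin (t/2) : ℂ);
     (Real.sin (t/2) : ℂ), (Real.cos (t/2) : ℂ)]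

/-- Rotation about the z-axis by angle `t`. -/
noncomputable def Rz (t : ℝ) : Matrix (Fin 2) (Fin 2) ℂ :=
  !![Complex.exp (-(Complex.I * t) / 2), 0; 0, Complex.exp ((Complex.I * t) / 2)]

/-- Fourier-space shift operator at momentum `κ`. -/
noncomputable def Sh (κ : ℝ) : Matrix (Fin 2) (Fin 2) ℂ :=
  !![Complex.exp (Complex.I * κ), 0; 0, Complex.exp (-(Complex.I * κ))]

/-- The coin operator `Cα`. -/
noncomputable def Calpha (α : ℝ) : Matrix (Fin 2) (Fin 2) ℂ :=
  !![(Real.sin α : ℂ), -Complex.I * Real.cos α;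
     Complex.I * Real.cos α, -(Real.sin α : ℂ)]

/-- The coin operator `Cβ`. -/
noncomputable def Cbeta (α : ℝ) : Matrix (Fin 2) (Fin 2) ℂ :=
  !![-(Real.cos α : ℂ), -Complex.I * Real.sin α;
     -Complex.I * Real.sin α, -(Real.cos α : ℂ)]

/-- The massless homogeneous Y–Y twisted quantum walk unitary at momentum `k`,
coin angle `α` and twist angle `θ`: `U_YY = (W_β · W_α)²` with
`W_α = S(k)·Cα` and `W_β = R_y(−θ)·S(k)·R_y(θ)·Cβ`. -/
noncomputable def UYY (k α θ : ℝ) : Matrix (Fin 2) (Fin 2) ℂ :=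
  (Ry (-θ) * Sh k * Ry θ * Cbeta α * (Sh k * Calpha α)) *
    (Ry (-θ) * Sh k * Ry θ * Cbeta α * (Sh k * Calpha α))

/-! In the basis `1, σx, σy, σz` every factor of the walk has at most two nonzero coordinates, so
the trace of one period `W = W_β W_α` can be read off the Pauli product formula:
`tr W = 2i sin k (sin θ cos 2α sin k − sin 2α cos k)`.
As `det W = −1`, Cayley–Hamilton gives `tr W² = (tr W)² + 2`. Only the cross term of the square
`(tr W)²` is odd in `k`, and its coefficient is a multiple of `sin θ sin 4α`. -/

theorem trace_sq_fin_two {R : Type*} [CommRing R] (M : Matrix (Fin 2) (Fin 2) R) :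
    (M ^ 2).trace = M.trace ^ 2 - 2 * M.det := by
  simp only [sq M, trace_fin_two, det_fin_two, mul_apply, Fin.sum_univ_two]
  ring

/-- The matrix `a + v · σ` with coordinates `a` and `v` in the basis `1, σx, σy, σz` of the complex
`2 × 2` matrices, used to multiply the factors of the walk and to take traces and determinants. -/
noncomputable def pauliComb (a : ℂ) (v : Fin 3 → ℂ) : Matrix (Fin 2) (Fin 2) ℂ :=
  a • 1 + v 0 • σx + v 1 • σy + v 2 • σz

theorem pauliComb_eq (a : ℂ) (v : Fin 3 → ℂ) :
    pauliComb a v =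
      !![a + v 2, v 0 - v 1 * Complex.I; v 0 + v 1 * Complex.I, a - v 2] := by
  ext i j
  fin_cases i <;> fin_cases j <;> simp [pauliComb, σx, σy, σz, sub_eq_add_neg]

theorem pauliComb_mul (a b : ℂ) (u v : Fin 3 → ℂ) :
    pauliComb a u * pauliComb b v =
      pauliComb (a * b + u ⬝ᵥ v) (a • v + b • u + Complex.I • (u ⨯₃ v)) := by
  simp only [pauliComb_eq, mul_fin_two, vec3_dotProduct, cross_apply, Pi.add_apply, Pi.smul_apply,
    smul_eq_mul, cons_val]
  refine congrArg of (vec2_eq (vec2_eq ?_ ?_) (vec2_eq ?_ ?_))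
  · linear_combination (-u 1 * v 1) * Complex.I_sq
  · linear_combination (u 2 * v 0 - u 0 * v 2) * Complex.I_sq
  · linear_combination (u 0 * v 2 - u 2 * v 0) * Complex.I_sq
  · linear_combination (-u 1 * v 1) * Complex.I_sq

theorem trace_pauliComb (a : ℂ) (v : Fin 3 → ℂ) : (pauliComb a v).trace = 2 * a := by
  rw [pauliComb_eq, trace_fin_two_of]
  ring

theorem det_pauliComb (a : ℂ) (v : Fin 3 → ℂ) : (pauliComb a v).det = a ^ 2 - v ⬝ᵥ v := by
  rw [pauliComb_eq, det_fin_two_of, vec3_dotProduct]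
  linear_combination v 1 ^ 2 * Complex.I_sq

theorem Sh_eq_pauliComb (k : ℝ) :
    Sh k = pauliComb (Real.cos k) ![0, 0, Complex.I * Real.sin k] := by
  have hpos : Complex.exp (Complex.I * k) = Real.cos k + Complex.I * Real.sin k := by
    rw [mul_comm, Complex.exp_mul_I, Complex.ofReal_cos, Complex.ofReal_sin, mul_comm Complex.I]
  have hneg : Complex.exp (-(Complex.I * k)) = Real.cos k - Complex.I * Real.sin k := by
    rw [← mul_neg, mul_comm, Complex.exp_mul_I, Complex.cos_neg, Complex.sin_neg,
      Complex.ofReal_cos, Complex.ofReal_sin]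
    ring
  simp [Sh, pauliComb_eq, hpos, hneg]

theorem Ry_eq_pauliComb (t : ℝ) :
    Ry t = pauliComb (Real.cos (t / 2)) ![0, -Complex.I * Real.sin (t / 2), 0] := by
  have hI (s : ℂ) : Complex.I * s * Complex.I = -s := by
    linear_combination s * Complex.I_sq
  simp [Ry, pauliComb_eq, hI]

theorem Calpha_eq_pauliComb (α : ℝ) :
    Calpha α = pauliComb 0 ![0, Real.cos α, Real.sin α] := by
  simp [Calpha, pauliComb_eq, mul_comm]

theorem Cbeta_eq_pauliComb (α : ℝ) :
    Cbeta α = pauliComb (-Real.cos α) ![-Complex.I * Real.sin α, 0, 0] := by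
  simp [Cbeta, pauliComb_eq]

theorem ofReal_cos_sq_add_ofReal_sin_sq (t : ℝ) :
    (Real.cos t : ℂ) ^ 2 + (Real.sin t : ℂ) ^ 2 = 1 := by
  exact_mod_cast Real.cos_sq_add_sin_sq t

theorem det_Sh (k : ℝ) : (Sh k).det = 1 := by
  rw [Sh, det_fin_two_of, ← Complex.exp_add]
  simp

theorem det_Ry (t : ℝ) : (Ry t).det = 1 := by
  rw [Ry_eq_pauliComb, det_pauliComb, vec3_dotProduct']
  linear_combination ofReal_cos_sq_add_ofReal_sin_sq (t / 2) -
    (Real.sin (t / 2) : ℂ) ^ 2 * Complex.I_sq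

theorem det_Calpha (α : ℝ) : (Calpha α).det = -1 := by
  rw [Calpha_eq_pauliComb, det_pauliComb, vec3_dotProduct']
  linear_combination -ofReal_cos_sq_add_ofReal_sin_sq α

theorem det_Cbeta (α : ℝ) : (Cbeta α).det = 1 := by
  rw [Cbeta_eq_pauliComb, det_pauliComb, vec3_dotProduct']
  linear_combination ofReal_cos_sq_add_ofReal_sin_sq α - (Real.sin α : ℂ) ^ 2 * Complex.I_sq

theorem Ry_neg_mul_pauliComb_mul_Ry (t : ℝ) (a : ℂ) (v : Fin 3 → ℂ) :
    Ry (-t) * pauliComb a v * Ry t =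
      pauliComb a ![Real.cos t * v 0 - Real.sin t * v 2, v 1,
        Real.sin t * v 0 + Real.cos t * v 2] := by
  have hcos : Real.cos t = Real.cos (t / 2) ^ 2 - Real.sin (t / 2) ^ 2 := by
    rw [← Real.cos_two_mul', mul_div_cancel₀ t two_ne_zero]
  have hsin : Real.sin t = 2 * Real.sin (t / 2) * Real.cos (t / 2) := by
    rw [← Real.sin_two_mul, mul_div_cancel₀ t two_ne_zero]
  have hsq := ofReal_cos_sq_add_ofReal_sin_sq (t / 2)
  rw [hcos, hsin, pauliComb_eq, pauliComb_eq, Ry, Ry, neg_div, Real.cos_neg, Real.sin_neg,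
    mul_fin_two, mul_fin_two]
  simp only [cons_val, Complex.ofReal_neg, Complex.ofReal_mul, Complex.ofReal_sub,
    Complex.ofReal_pow, Complex.ofReal_ofNat]
  refine congrArg of (vec2_eq (vec2_eq ?_ ?_) (vec2_eq ?_ ?_))
  · linear_combination a * hsq
  · linear_combination (-v 1 * Complex.I) * hsq
  · linear_combination (v 1 * Complex.I) * hsq
  · linear_combination a * hsq

/-- The first step `W_α = S(k) Cα` of the walk. -/
noncomputable def Walpha (k α : ℝ) : Matrix (Fin 2) (Fin 2) ℂ :=
  Sh k * Calpha α

/-- The second step `W_β = R_y(−θ) S(k) R_y(θ) Cβ` of the walk, in which the shift is twisted. -/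
noncomputable def Wbeta (k α θ : ℝ) : Matrix (Fin 2) (Fin 2) ℂ :=
  Ry (-θ) * Sh k * Ry θ * Cbeta α

theorem UYY_eq_sq (k α θ : ℝ) : UYY k α θ = (Wbeta k α θ * Walpha k α) ^ 2 :=
  (sq _).symm

theorem det_Wbeta_mul_Walpha (k α θ : ℝ) : (Wbeta k α θ * Walpha k α).det = -1 := by
  simp only [Wbeta, Walpha, det_mul, det_Ry, det_Sh, det_Calpha, det_Cbeta, one_mul]

theorem Walpha_eq_pauliComb (k α : ℝ) :
    Walpha k α = pauliComb (Complex.I * Real.sin k * Real.sin α)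
      ![Real.sin k * Real.cos α, Real.cos k * Real.cos α, Real.cos k * Real.sin α] := by
  rw [Walpha, Sh_eq_pauliComb, Calpha_eq_pauliComb, pauliComb_mul, vec3_dotProduct', cross_apply]
  simp only [smul_vec3, vec3_add, cons_val, smul_eq_mul]
  congr 1
  · ring
  · refine vec3_eq ?_ ?_ ?_
    · linear_combination (-Real.sin k * Real.cos α : ℂ) * Complex.I_sq
    · ring
    · ring

theorem Wbeta_eq_pauliComb (k α θ : ℝ) :
    Wbeta k α θ = pauliComb (-(Real.cos k * Real.cos α) - Real.sin k * Real.sin θ * Real.sin α)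
      ![Complex.I * (Real.sin k * Real.sin θ * Real.cos α - Real.cos k * Real.sin α),
        Complex.I * Real.sin k * Real.cos θ * Real.sin α,
        -Complex.I * Real.sin k * Real.cos θ * Real.cos α] := by
  rw [Wbeta, Sh_eq_pauliComb, Ry_neg_mul_pauliComb_mul_Ry, Cbeta_eq_pauliComb, pauliComb_mul,
    vec3_dotProduct', cross_apply]
  simp only [smul_vec3, vec3_add, cons_val, smul_eq_mul]
  congr 1
  · linear_combination (Real.sin k * Real.sin θ * Real.sin α : ℂ) * Complex.I_sq
  · refine vec3_eq ?_ ?_ ?_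
    · ring
    · linear_combination (-Complex.I * Real.sin k * Real.cos θ * Real.sin α : ℂ) * Complex.I_sq
    · ring

theorem trace_Wbeta_mul_Walpha (k α θ : ℝ) :
    (Wbeta k α θ * Walpha k α).trace =
      2 * Complex.I * (Real.sin k * (Real.sin θ * Real.cos (2 * α) * Real.sin k -
        Real.sin (2 * α) * Real.cos k) : ℝ) := by
  rw [Wbeta_eq_pauliComb, Walpha_eq_pauliComb, pauliComb_mul, trace_pauliComb, vec3_dotProduct',
    Real.cos_two_mul', Real.sin_two_mul]
  push_cast
  ring

theorem trace_UYY (k α θ : ℝ) :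
    (UYY k α θ).trace = (2 - 4 * (Real.sin k * (Real.sin θ * Real.cos (2 * α) * Real.sin k -
      Real.sin (2 * α) * Real.cos k)) ^ 2 : ℝ) := by
  rw [UYY_eq_sq, trace_sq_fin_two, trace_Wbeta_mul_Walpha, det_Wbeta_mul_Walpha, mul_pow, mul_pow,
    Complex.I_sq]
  push_cast
  ring

theorem trace_UYY_neg_sub_trace_UYY (k α θ : ℝ) :
    (UYY (-k) α θ).trace - (UYY k α θ).trace =
      (-8 * Real.sin k ^ 3 * Real.cos k * (Real.sin θ * Real.sin (4 * α)) : ℝ) := by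
  have sin_four_mul : Real.sin (4 * α) = 2 * Real.sin (2 * α) * Real.cos (2 * α) := by
    rw [← Real.sin_two_mul]
    ring_nf
  rw [trace_UYY, trace_UYY, Real.sin_neg, Real.cos_neg, sin_four_mul, ← Complex.ofReal_sub]
  ring_nf

/-- The spectrum of the homogeneous Y–Y twisted walk is symmetric in momentum
(`Tr U_YY(−k) = Tr U_YY(k)` for all `k`) iff `sin θ · sin 4α = 0`. -/
theorem trace_UYY_symm_iff (α θ : ℝ) :
    (∀ k : ℝ, (UYY (-k) α θ).trace = (UYY k α θ).trace) ↔
      Real.sin θ * Real.sin (4*α) = 0 := by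
  have trace_symm_at (k : ℝ) : (UYY (-k) α θ).trace = (UYY k α θ).trace ↔
      -8 * Real.sin k ^ 3 * Real.cos k * (Real.sin θ * Real.sin (4 * α)) = 0 := by
    rw [← sub_eq_zero, trace_UYY_neg_sub_trace_UYY, Complex.ofReal_eq_zero]
  simp only [trace_symm_at]
  constructor
  · intro hodd
    refine (mul_eq_zero.mp (hodd (Real.pi / 4))).resolve_left ?_
    rw [Real.sin_pi_div_four, Real.cos_pi_div_four]
    positivity
  · intro h k
    rw [h, mul_zero]
end

section
/- Let k, α, θ ∈ ℝ and set A = sin(2α). Then Tr(U_XI(k))/2 equals (as a complex number, with real right-hand side coerced to ℂ): (A·(A + sin θ)/4)·(cos(4k) − 1) + ((1 − cos θ)/2)·cos(2k) + (1 + cos θ)/2. -/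
open Matrix Filter Topology

/-- The massless alternate-twist walk unitary at momentum `k`, coin angle `α`
and twist angle `θ`: `U_XI = W_{β2} · W_α · W_{β1} · W_α` with `W_α = S(k)·Cα`,
`W_{β1} = R_x(−θ)·S(k)·R_x(θ)·Cβ` and `W_{β2} = S(k)·Cβ`. -/
noncomputable def UXI (k α θ : ℝ) : Matrix (Fin 2) (Fin 2) ℂ :=
  (Sh k * Cbeta α) * (Sh k * Calpha α) *
    (Rx (-θ) * Sh k * Rx θ * Cbeta α) * (Sh k * Calpha α)

/-!
In the quaternion basis `-iσx, iσy, iσz`, conjugating the shift by an `x`-rotation turns its axis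
inside the `yz`-plane, and `Cβ · S(k) · Cα` is, up to sign, the shift twisted by `2α` times `σy`.
Moving the two factors `σy` together negates the momentum and the twist angle of the shifts between
them, so `U_XI` is a product of four twisted shifts. Half its trace is the real part of a product
of four quaternions with coplanar axes, in which only the angles between these axes enter.
-/

open scoped Quaternion

/-- The basis `-iσx, iσy, iσz` of the Pauli representation of the quaternions. The signs are chosen
so that `Rx` and `Sh` have nonnegative coordinates for small positive angles. -/
noncomputable def pauliBasis :
    QuaternionAlgebra.Basis (Matrix (Fin 2) (Fin 2) ℂ) (-1 : ℝ) 0 (-1) where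
  i := -Complex.I • σx
  j := Complex.I • σy
  k := Complex.I • σz
  i_mul_i := by simp [σx, Matrix.one_fin_two]
  j_mul_j := by simp [σy, Matrix.one_fin_two]
  i_mul_j := by simp [σx, σy, σz]
  j_mul_i := by simp [σx, σy, σz]

/-- The Pauli representation of the quaternions by complex `2 × 2` matrices, through which products
of rotations and shifts are computed. -/
noncomputable def pauliRep : ℍ[ℝ] →ₐ[ℝ] Matrix (Fin 2) (Fin 2) ℂ :=
  pauliBasis.liftHom

theorem pauliRep_apply (q : ℍ[ℝ]) :
    pauliRep q =
      !![(q.re : ℂ) + Complex.I * q.imK, q.imJ - Complex.I * q.imI;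
        -q.imJ - Complex.I * q.imI, q.re - Complex.I * q.imK] := by
  change pauliBasis.lift q = _
  ext a b
  fin_cases a <;> fin_cases b <;>
    simp [QuaternionAlgebra.Basis.lift, pauliBasis, σx, σy, σz, Matrix.algebraMap_matrix_apply] <;>
    ring

theorem trace_pauliRep (q : ℍ[ℝ]) : (pauliRep q).trace = 2 * (q.re : ℂ) := by
  rw [pauliRep_apply, Matrix.trace_fin_two_of]
  ring

/-- The shift with momentum `κ` and axis turned from `z` by the angle `φ` in the `yz`-plane, as a
quaternion. -/
@[simps]
noncomputable def twistedShift (κ φ : ℝ) : ℍ[ℝ] :=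
  ⟨Real.cos κ, 0, Real.sin κ * Real.sin φ, Real.sin κ * Real.cos φ⟩

/-- The unit quaternion of the rotation about the x-axis by the angle `t`. -/
@[simps]
noncomputable def xRotor (t : ℝ) : ℍ[ℝ] :=
  ⟨Real.cos (t / 2), Real.sin (t / 2), 0, 0⟩

theorem Rx_eq_pauliRep (t : ℝ) : Rx t = pauliRep (xRotor t) := by
  simp [Rx, pauliRep_apply]

theorem Sh_eq_pauliRep (κ : ℝ) : Sh κ = pauliRep (twistedShift κ 0) := by
  have exp_I_mul (t : ℂ) :
      Complex.exp (Complex.I * t) = Complex.cos t + Complex.I * Complex.sin t := by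
    rw [mul_comm, Complex.exp_mul_I, mul_comm Complex.I]
  simp [Sh, pauliRep_apply, exp_I_mul, ← mul_neg, sub_eq_add_neg]

theorem Rx_neg_mul_Sh_mul_Rx (κ φ : ℝ) :
    Rx (-φ) * Sh κ * Rx φ = pauliRep (twistedShift κ φ) := by
  obtain ⟨t, rfl⟩ : ∃ t, φ = 2 * t := ⟨φ / 2, by ring⟩
  have xRotor_conj : xRotor (-(2 * t)) * twistedShift κ 0 * xRotor (2 * t) =
      twistedShift κ (2 * t) := by
    have pythagoras := Real.sin_sq_add_cos_sq t
    ext <;> simp [neg_div, Real.sin_two_mul, Real.cos_two_mul'] <;> grind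
  rw [Sh_eq_pauliRep, Rx_eq_pauliRep, Rx_eq_pauliRep, ← map_mul, ← map_mul, xRotor_conj]

theorem Cbeta_eq_neg_Rx (α : ℝ) : Cbeta α = -Rx (-(2 * α)) := by
  simp [Cbeta, Rx, neg_div]

theorem Calpha_eq_Rx_mul_σy (α : ℝ) : Calpha α = Rx (2 * α) * σy := by
  simp [Calpha, Rx, σy, mul_comm, ← mul_assoc]

theorem Cbeta_mul_Sh_mul_Calpha (k α : ℝ) :
    Cbeta α * Sh k * Calpha α = -(pauliRep (twistedShift k (2 * α)) * σy) := by
  rw [Cbeta_eq_neg_Rx, Calpha_eq_Rx_mul_σy, ← Rx_neg_mul_Sh_mul_Rx]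
  noncomm_ring

theorem σy_mul_self : σy * σy = 1 := by
  simp [σy, Matrix.one_fin_two]

theorem σy_mul_pauliRep_twistedShift (κ φ : ℝ) :
    σy * pauliRep (twistedShift κ φ) = pauliRep (twistedShift (-κ) (-φ)) * σy := by
  simp [pauliRep_apply, σy, sub_eq_add_neg, add_comm, mul_comm Complex.I]

/-- The walk unitary `UXI` as a quaternion: a product of four twisted shifts. -/
noncomputable def uxiQuaternion (k α θ : ℝ) : ℍ[ℝ] :=
  twistedShift k 0 * twistedShift k (2 * α) *
    twistedShift (-k) (-θ) * twistedShift (-k) (-(2 * α))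

theorem UXI_eq_pauliRep (k α θ : ℝ) : UXI k α θ = pauliRep (uxiQuaternion k α θ) := by
  calc
    UXI k α θ = Sh k * (Cbeta α * Sh k * Calpha α) * (Rx (-θ) * Sh k * Rx θ) *
        (Cbeta α * Sh k * Calpha α) := by
      simp only [UXI, mul_assoc]
    _ = pauliRep (twistedShift k 0) * pauliRep (twistedShift k (2 * α)) *
        (σy * pauliRep (twistedShift k θ) * pauliRep (twistedShift k (2 * α))) * σy := by
      rw [Cbeta_mul_Sh_mul_Calpha, Rx_neg_mul_Sh_mul_Rx, Sh_eq_pauliRep]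
      noncomm_ring
    _ = pauliRep (uxiQuaternion k α θ) := by
      simp only [uxiQuaternion, map_mul, σy_mul_pauliRep_twistedShift, mul_assoc, σy_mul_self,
        mul_one]

theorem re_twistedShift_mul_mul_mul (κ₁ κ₂ κ₃ κ₄ φ₁ φ₂ φ₃ φ₄ : ℝ) :
    (twistedShift κ₁ φ₁ * twistedShift κ₂ φ₂ * twistedShift κ₃ φ₃ * twistedShift κ₄ φ₄).re =
      Real.cos κ₁ * Real.cos κ₂ * Real.cos κ₃ * Real.cos κ₄
      - Real.sin κ₁ * Real.sin κ₂ * Real.cos κ₃ * Real.cos κ₄ * Real.cos (φ₁ - φ₂)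
      - Real.sin κ₁ * Real.cos κ₂ * Real.sin κ₃ * Real.cos κ₄ * Real.cos (φ₁ - φ₃)
      - Real.sin κ₁ * Real.cos κ₂ * Real.cos κ₃ * Real.sin κ₄ * Real.cos (φ₁ - φ₄)
      - Real.cos κ₁ * Real.sin κ₂ * Real.sin κ₃ * Real.cos κ₄ * Real.cos (φ₂ - φ₃)
      - Real.cos κ₁ * Real.sin κ₂ * Real.cos κ₃ * Real.sin κ₄ * Real.cos (φ₂ - φ₄)
      - Real.cos κ₁ * Real.cos κ₂ * Real.sin κ₃ * Real.sin κ₄ * Real.cos (φ₃ - φ₄)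
      + Real.sin κ₁ * Real.sin κ₂ * Real.sin κ₃ * Real.sin κ₄ *
          Real.cos ((φ₁ - φ₂) + (φ₃ - φ₄)) := by
  simp only [re_twistedShift, imI_twistedShift, imJ_twistedShift, imK_twistedShift,
    Quaternion.re_mul, Quaternion.imI_mul, Quaternion.imJ_mul, Quaternion.imK_mul,
    Real.cos_add, Real.cos_sub, Real.sin_sub]
  ring

theorem re_uxiQuaternion (k α θ : ℝ) :
    (uxiQuaternion k α θ).re =
      Real.cos k ^ 4 + Real.sin k ^ 4 * Real.cos θ
      + (Real.sin k * Real.cos k) ^ 2 *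
          (1 + Real.cos θ - 2 * Real.sin (2 * α) * (Real.sin (2 * α) + Real.sin θ)) := by
  have alternating_sum : (0 - 2 * α) + (-θ - -(2 * α)) = -θ := by ring
  rw [uxiQuaternion, re_twistedShift_mul_mul_mul, alternating_sum]
  simp only [Real.cos_neg, Real.sin_neg, Real.cos_sub, Real.cos_zero, Real.sin_zero]
  linear_combination (Real.sin k * Real.cos k) ^ 2 * Real.sin_sq_add_cos_sq (2 * α)

/-- Closed form of `Tr(U_XI)/2` for the alternate-twist walk. -/
theorem trace_UXI_div_two (k α θ : ℝ) :
    (UXI k α θ).trace / 2 =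
      (((Real.sin (2*α) * (Real.sin (2*α) + Real.sin θ) / 4) * (Real.cos (4*k) - 1)
        + ((1 - Real.cos θ) / 2) * Real.cos (2*k)
        + (1 + Real.cos θ) / 2 : ℝ) : ℂ) := by
  have cos_four_mul : Real.cos (4 * k) = 1 - 8 * (Real.sin k * Real.cos k) ^ 2 := by
    rw [show 4 * k = 2 * (2 * k) by ring, Real.cos_two_mul_eq_one_sub, Real.sin_two_mul]
    ring
  rw [UXI_eq_pauliRep, trace_pauliRep, mul_div_cancel_left₀ _ two_ne_zero,
    re_uxiQuaternion, cos_four_mul, Real.cos_two_mul']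
  congr 1
  linear_combination
    (Real.cos k ^ 2 + Real.cos θ * Real.sin k ^ 2 + (1 + Real.cos θ) / 2) *
      Real.sin_sq_add_cos_sq k
end
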